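/- arXiv:1609.02074 — 2 statements merged into one kernel-verified Lean document; each statement's English description precedes it below -/
import Mathlib

section
/- J is strictly convex on the open half-line (0, ∞): StrictConvexOn ℝ (Set.Ioi 0) J. -/
/-!
On `(0, ∞)` all the non-logarithmic terms in the derivative of `J n` cancel, since
`p * (1 / p - p / (1 + p ^ 2)) = 1 / (1 + p ^ 2)` is the derivative of `arctan`. Hence
`(J n)' p = log ((2 / n) * p / √(1 + p ^ 2))` (`hasDerivAt_J`), which is strictly increasing
because `p / √(1 + p ^ 2)` is.
-/

/-- The large-deviation function for the number of separating loops,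
`J(p) = p * log((2/n) * p / sqrt (1+p^2)) + arccot p - arccos (n/2)`,
where `arccot p = pi/2 - arctan p`. -/
noncomputable def J (n p : ℝ) : ℝ :=
  p * Real.log ((2 / n) * p / Real.sqrt (1 + p ^ 2)) +
    (Real.pi / 2 - Real.arctan p) - Real.arccos (n / 2)

lemma hasDerivAt_J {n p : ℝ} (hn : 0 < n) (hp : 0 < p) :
    HasDerivAt (J n) (Real.log ((2 / n) * p / Real.sqrt (1 + p ^ 2))) p := by
  have hq : 0 < 1 + p ^ 2 := by positivity
  have hs : 0 < Real.sqrt (1 + p ^ 2) := Real.sqrt_pos.2 hq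
  have hsq : Real.sqrt (1 + p ^ 2) ^ 2 = 1 + p ^ 2 := Real.sq_sqrt hq.le
  have hroot : HasDerivAt (fun x : ℝ => Real.sqrt (1 + x ^ 2)) (p / Real.sqrt (1 + p ^ 2)) p := by
    have h := (((hasDerivAt_id p).pow 2).const_add 1).sqrt hq.ne'
    refine h.congr_deriv ?_
    simp
    field_simp
  have hlog := ((((hasDerivAt_id p).const_mul (2 / n)).div hroot hs.ne').log
    (by simp only [id, Pi.div_apply]; positivity))
  have h := (((hasDerivAt_id p).mul hlog).add
    ((Real.hasDerivAt_arctan p).const_sub (Real.pi / 2))).sub_const (Real.arccos (n / 2))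
  refine h.congr_deriv ?_
  simp only [id, Pi.div_apply]
  generalize Real.log _ = L
  generalize Real.sqrt (1 + p ^ 2) = s at *
  rw [← hsq]
  field_simp
  linear_combination hsq

lemma div_sqrt_lt_div_sqrt {x y : ℝ} (hx : 0 < x) (hxy : x < y) :
    x / Real.sqrt (1 + x ^ 2) < y / Real.sqrt (1 + y ^ 2) := by
  have hy : 0 < y := hx.trans hxy
  rw [div_lt_div_iff₀ (by positivity) (by positivity)]
  refine lt_of_pow_lt_pow_left₀ 2 (by positivity) ?_
  rw [mul_pow, mul_pow, Real.sq_sqrt (by positivity), Real.sq_sqrt (by positivity)]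
  nlinarith

/-- `J` is strictly convex on the open half-line `(0, ∞)`. -/
theorem strictConvexOn_J (n : ℝ) (hn0 : 0 < n) (hn2 : n < 2) :
    StrictConvexOn ℝ (Set.Ioi (0 : ℝ)) (J n) := by
  refine StrictMonoOn.strictConvexOn_of_deriv (convex_Ioi 0)
    (fun p hp => (hasDerivAt_J hn0 hp).continuousAt.continuousWithinAt) ?_
  rw [interior_Ioi]
  intro x hx y hy hxy
  have hx' : 0 < x := hx
  rw [(hasDerivAt_J hn0 hx).deriv, (hasDerivAt_J hn0 hy).deriv]
  refine Real.log_lt_log (by positivity) ?_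
  rw [mul_div_assoc, mul_div_assoc]
  exact mul_lt_mul_of_pos_left (div_sqrt_lt_div_sqrt hx' hxy) (by positivity)
end

section
/- Assume θ₁′(0, τ) ≠ 0 and θ₁(b/2, τ) ≠ 0. Then the limit υ_b := lim_{w → 0, w ≠ 0} (Υ_b′(w) + 1/w²) exists and equals (1/2) * θ₁″(b/2, τ) / θ₁(b/2, τ) - (1/6) * θ₁‴(0, τ) / θ₁′(0, τ), where Υ_b′ denotes the complex derivative of Υ_b. (This identifies the coefficient υ_b in the Laurent expansion Υ_b(w) = 1/w + const + υ_b·w + O(w²).) -/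
/-!
Write `f = θ₁(·, τ)` and `c = b/2`. Then `f` is entire (it is an exponential times `jacobiTheta₂`)
and odd (reindex the series by `m ↦ -1 - m`), so `f(v) = v h(v)` with `h` entire and `h(0) = f′(0)`,
`h′(0) = f″(0)/2 = 0`, `h″(0) = f‴(0)/3`. With `N(v) = f′(0) f(v - c) / f(-c)`, the difference
`N - h` vanishes at `0`, hence equals `v m(v)` with `m` entire, and near `0`, off `0`,
`Υ_b(v) = N(v) / (v h(v)) = 1/v + m(v)/h(v)`.
So `Υ_b′(w) + 1/w²` tends to `(m/h)′(0) = m′(0)/h(0) = (N″(0)/2 - f‴(0)/6) / f′(0)`, and oddness of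
`f` and `f″` turns `f″(-c)/f(-c)` into `f″(c)/f(c)`.
-/

open Complex

/-- The Jacobi theta function
`θ₁(v,τ) = -∑_{m ∈ ℤ} exp(iπτ(m+1/2)² + iπ(v+1/2)(2m+1))`. -/
noncomputable def theta1 (v τ : ℂ) : ℂ :=
  - ∑' m : ℤ, Complex.exp ((Real.pi : ℂ) * Complex.I * τ * ((m : ℂ) + 1 / 2) ^ 2 +
      (Real.pi : ℂ) * Complex.I * (v + 1 / 2) * (2 * (m : ℂ) + 1))

/-- `θ₁′`, the derivative of `θ₁` in its first variable. -/
noncomputable def theta1d (v τ : ℂ) : ℂ := deriv (fun w => theta1 w τ) v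

/-- `θ₁″`, the second derivative of `θ₁` in its first variable. -/
noncomputable def theta1dd (v τ : ℂ) : ℂ := deriv (fun w => theta1d w τ) v

/-- `θ₁‴`, the third derivative of `θ₁` in its first variable. -/
noncomputable def theta1ddd (v τ : ℂ) : ℂ := deriv (fun w => theta1dd w τ) v

/-- The special function `Υ_b(v) = (θ₁′(0,τ)/θ₁(-b/2,τ)) · (θ₁(v-b/2,τ)/θ₁(v,τ))`. -/
noncomputable def Upsilon (b : ℝ) (τ v : ℂ) : ℂ :=
  (theta1d 0 τ / theta1 (-(b : ℂ) / 2) τ) * (theta1 (v - (b : ℂ) / 2) τ / theta1 v τ)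

theorem theta1_eq_jacobiTheta₂ (v τ : ℂ) :
    theta1 v τ = -(cexp (Real.pi * I * τ / 4 + Real.pi * I * (v + 1 / 2)) *
      jacobiTheta₂ (v + 1 / 2 + τ / 2) τ) := by
  unfold theta1 jacobiTheta₂
  rw [← tsum_mul_left]
  congr 1
  refine tsum_congr fun m => ?_
  rw [jacobiTheta₂_term, ← Complex.exp_add]
  congr 1
  ring

theorem differentiable_theta1 {τ : ℂ} (hτ : 0 < τ.im) :
    Differentiable ℂ (fun v => theta1 v τ) := by
  intro v
  simp only [theta1_eq_jacobiTheta₂]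
  have h : DifferentiableAt ℂ (fun v : ℂ => jacobiTheta₂ (v + 1 / 2 + τ / 2) τ) v :=
    (differentiableAt_jacobiTheta₂_fst (v + 1 / 2 + τ / 2) hτ).comp v
      (f := fun v : ℂ => v + 1 / 2 + τ / 2) (by fun_prop)
  fun_prop

theorem theta1_neg (v τ : ℂ) : theta1 (-v) τ = -theta1 v τ := by
  unfold theta1
  congr 1
  rw [← tsum_neg]
  refine ((Equiv.subLeft (-1 : ℤ)).tsum_eq _).symm.trans (tsum_congr fun m => ?_)
  -- The two exponents differ by `-(2m+1)πi`, which produces the sign.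
  have hs : cexp (-(Real.pi * I) + ((-m : ℤ) : ℂ) * (2 * Real.pi * I)) = -1 := by
    rw [Complex.exp_add, Complex.exp_int_mul_two_pi_mul_I, Complex.exp_neg, Complex.exp_pi_mul_I]
    norm_num
  refine Eq.trans ?_ (neg_one_mul _)
  rw [← hs, ← Complex.exp_add]
  congr 1
  simp only [Equiv.subLeft_apply]
  push_cast
  ring

/-- Division by `v` of an entire function vanishing at `0`, with the first Taylor data of the
quotient at `0`. -/
theorem exists_entire_quotient {p : ℂ → ℂ} (hp : Differentiable ℂ p) (h0 : p 0 = 0) :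
    ∃ q : ℂ → ℂ, Differentiable ℂ q ∧ (∀ v, p v = v * q v) ∧ q 0 = deriv p 0 ∧
      deriv q 0 = deriv (deriv p) 0 / 2 ∧
      deriv (deriv q) 0 = deriv (deriv (deriv p)) 0 / 3 := by
  have hq : Differentiable ℂ (dslope p 0) := by
    rw [← differentiableOn_univ] at hp ⊢
    exact (Complex.differentiableOn_dslope Filter.univ_mem).2 hp
  have hpq : ∀ v, p v = v * dslope p 0 v := fun v => by
    have := sub_smul_dslope p 0 v
    simpa [h0] using this.symm
  generalize hQ : dslope p 0 = q at hq hpq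
  have hq' : Differentiable ℂ (deriv q) := hq.deriv
  have hq'' : Differentiable ℂ (deriv (deriv q)) := hq'.deriv
  have e0 : p = fun v => v * q v := funext hpq
  have e1 : deriv p = fun v => q v + v * deriv q v := by
    funext v
    rw [e0]
    refine Eq.trans ((hasDerivAt_id v).mul (hq v).hasDerivAt).deriv ?_
    simp
  have e2 : deriv (deriv p) = fun v => 2 * deriv q v + v * deriv (deriv q) v := by
    funext v
    rw [e1]
    have := ((hq v).hasDerivAt.add ((hasDerivAt_id v).mul (hq' v).hasDerivAt)).deriv
    refine Eq.trans this ?_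
    simp only [id]
    ring
  have e3 : deriv (deriv (deriv p)) 0 = 3 * deriv (deriv q) 0 := by
    rw [e2]
    have := (((hq' 0).hasDerivAt.const_mul 2).add
      ((hasDerivAt_id 0).mul (hq'' 0).hasDerivAt)).deriv
    refine Eq.trans this ?_
    simp only [id]
    ring
  refine ⟨q, hq, hpq, ?_, ?_, ?_⟩
  · simp [e1]
  · simp [e2]
  · rw [e3]; ring

theorem deriv_neg_of_odd {f : ℂ → ℂ} (hodd : ∀ v, f (-v) = -f v) (v : ℂ) :
    deriv f (-v) = deriv f v := by
  have h := deriv_comp_neg f v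
  simp only [hodd, deriv.fun_neg] at h
  exact (neg_injective h).symm

theorem deriv_neg_of_even {f : ℂ → ℂ} (heven : ∀ v, f (-v) = f v) (v : ℂ) :
    deriv f (-v) = -deriv f v := by
  have h := deriv_comp_neg f v
  simp only [heven] at h
  rw [h, neg_neg]

/-- The limit for an arbitrary odd entire function `f` with a simple zero at `0` in place of
`θ₁`. -/
theorem tendsto_deriv_quotient_of_odd {f : ℂ → ℂ} (hf : Differentiable ℂ f)
    (hodd : ∀ v, f (-v) = -f v) {c : ℂ} (h1 : deriv f 0 ≠ 0) (h2 : f c ≠ 0) :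
    Filter.Tendsto
      (fun w : ℂ => deriv (fun v => deriv f 0 / f (-c) * (f (v - c) / f v)) w + 1 / w ^ 2)
      (nhdsWithin 0 {(0 : ℂ)}ᶜ)
      (nhds ((1 / 2) * deriv (deriv f) c / f c -
        (1 / 6) * deriv (deriv (deriv f)) 0 / deriv f 0)) := by
  have hf0 : f 0 = 0 := by simpa [self_eq_neg] using hodd 0
  have hdd : ∀ v, deriv (deriv f) (-v) = -deriv (deriv f) v :=
    deriv_neg_of_even (deriv_neg_of_odd hodd)
  have hdd0 : deriv (deriv f) 0 = 0 := by simpa [self_eq_neg] using hdd 0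
  have hfc : f (-c) ≠ 0 := by rw [hodd]; exact neg_ne_zero.2 h2
  obtain ⟨h, hh, hfh, hh0, hh1, hh2⟩ := exists_entire_quotient hf hf0
  rw [hdd0, zero_div] at hh1
  set a := deriv f 0 / f (-c) with ha
  have hN : Differentiable ℂ (fun v => a * f (v - c)) :=
    (hf.comp (differentiable_id.sub_const c)).const_mul a
  have hM : Differentiable ℂ (fun v => a * f (v - c) - h v) := hN.sub hh
  have hM0 : a * f (0 - c) - h 0 = 0 := by
    rw [hh0, zero_sub, ha, div_mul_cancel₀ _ hfc, sub_self]
  obtain ⟨m, hm, hMm, -, hm1, -⟩ := exists_entire_quotient hM hM0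
  have hm1' : deriv m 0 = (a * deriv (deriv f) (-c) - deriv (deriv (deriv f)) 0 / 3) / 2 := by
    rw [hm1, ← hh2]
    have e1 : deriv (fun v => a * f (v - c) - h v) = fun v => a * deriv f (v - c) - deriv h v := by
      funext v
      exact ((((hf (v - c)).hasDerivAt.comp_sub_const v c).const_mul a).sub
        (hh v).hasDerivAt).deriv
    have e2 := ((((hf.deriv (0 - c)).hasDerivAt.comp_sub_const 0 c).const_mul a).sub
        (hh.deriv 0).hasDerivAt).deriv
    rw [e1]
    congr 1
    refine Eq.trans e2 ?_
    rw [zero_sub]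
  have hh0' : h 0 ≠ 0 := hh0 ▸ h1
  have hF : AnalyticAt ℂ (fun v => m v / h v) 0 :=
    (hm.analyticAt 0).fun_div (hh.analyticAt 0) hh0'
  have hF1 : deriv (fun v => m v / h v) 0 = (1 / 2) * deriv (deriv f) c / f c -
        (1 / 6) * deriv (deriv (deriv f)) 0 / deriv f 0 := by
    have e := ((hm 0).hasDerivAt.fun_div (hh 0).hasDerivAt hh0').deriv
    rw [e, hh1, hm1', hh0, ha, hdd, hodd]
    field_simp
    ring
  rw [← hF1]
  refine Filter.Tendsto.congr' ?_
    (hF.deriv.continuousAt.tendsto.mono_left nhdsWithin_le_nhds)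
  have hne : ∀ᶠ v in nhds (0 : ℂ), h v ≠ 0 := hh.continuous.continuousAt.eventually_ne hh0'
  filter_upwards [nhdsWithin_le_nhds hne.eventually_nhds, self_mem_nhdsWithin] with w hw hw0
  have hw0 : w ≠ 0 := hw0
  have heq : (fun v => a * (f (v - c) / f v)) =ᶠ[nhds w] fun v => v⁻¹ + m v / h v := by
    filter_upwards [hw, eventually_ne_nhds hw0] with v hv hv0
    have := hMm v
    rw [sub_eq_iff_eq_add] at this
    rw [← mul_div_assoc, this, hfh v]
    field_simp
    ring
  have hd : DifferentiableAt ℂ (fun v => m v / h v) w :=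
    (hm w).fun_div (hh w) hw.self_of_nhds
  have e := ((hasDerivAt_inv hw0).fun_add hd.hasDerivAt).deriv
  rw [heq.deriv_eq, e]
  ring

/-- The limit `υ_b = lim_{w → 0} (Υ_b′(w) + 1/w²)` exists and equals
`(1/2)·θ₁″(b/2,τ)/θ₁(b/2,τ) - (1/6)·θ₁‴(0,τ)/θ₁′(0,τ)`. -/
theorem Upsilon_upsilon_b (τ : ℂ) (hτ : 0 < τ.im) (b : ℝ) (hb0 : 0 < b) (hb1 : b < 1)
    (h1 : theta1d 0 τ ≠ 0) (h2 : theta1 ((b : ℂ) / 2) τ ≠ 0) :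
    Filter.Tendsto (fun w : ℂ => deriv (Upsilon b τ) w + 1 / w ^ 2)
      (nhdsWithin 0 {(0 : ℂ)}ᶜ)
      (nhds ((1 / 2) * theta1dd ((b : ℂ) / 2) τ / theta1 ((b : ℂ) / 2) τ -
        (1 / 6) * theta1ddd 0 τ / theta1d 0 τ)) := by
  have h := tendsto_deriv_quotient_of_odd (differentiable_theta1 hτ)
    (fun v => theta1_neg v τ) (c := (b : ℂ) / 2) h1 h2
  rw [← neg_div] at h
  exact h
end
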